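/- Let ς, k, r be real numbers with ς > 0, k > 0 and 1 + k > ς. Let p, v, a : ℝ → ℝ be differentiable functions satisfying the closed-loop equations p' = v, v' = a, a'(t) = ( −a(t) + k·( r − (p(t) + v(t) + a(t)) ) )/ς for all t ≥ 0. Then (p(t), v(t), a(t)) → (r, 0, 0) as t → ∞; in particular the output y = p + v + a converges to the constant reference r, so the static policy achieves null steady-state tracking error in the undisturbed training environment. -/

import Mathlib

open Filter Topology

/-! If `x' = L x` and a polynomial `p` with all its roots in the open left half-plane satisfies
`p(L) = 0`, then `x → 0`: writing `p = (X - μ) q`, the curve `y = q(L) x` solves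
`y' = μ y + p(L) x`, with decaying forcing, so `y → 0`, and one linear factor of `p` has been
removed. By Cayley–Hamilton this applies to the characteristic polynomial of a Hurwitz
matrix. The closed loop in the variables `(p - r, v, a)` is the companion system of
`X³ + ((1 + k) / ς) X² + (k / ς) X + k / ς`, for which the Routh–Hurwitz condition is
`1 + k > ς`. -/

section LinearODE

open Polynomial

variable {E : Type*} [NormedAddCommGroup E] [NormedSpace ℂ E]

lemma norm_le_gronwallBound_of_hasDerivAt_smul_add {μ : ℂ} {f g : ℝ → E} {T ε : ℝ}
    (hf : ∀ t, T ≤ t → HasDerivAt f (μ • f t + g t) t) (hg : ∀ t, T ≤ t → ‖g t‖ ≤ ε)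
    {t : ℝ} (ht : T ≤ t) : ‖f t‖ ≤ gronwallBound ‖f T‖ μ.re ε (t - T) := by
  have norm_exp_smul (s : ℝ) (w : E) :
      ‖Complex.exp (-μ * ↑(s - T)) • w‖ = Real.exp (-μ.re * (s - T)) * ‖w‖ := by
    rw [norm_smul, Complex.norm_exp, Complex.re_mul_ofReal, Complex.neg_re]
  have hasDerivAt_exp_smul (s : ℝ) (hs : T ≤ s) :
      HasDerivAt (fun s : ℝ => Complex.exp (-μ * ↑(s - T)) • f s)
        (Complex.exp (-μ * ↑(s - T)) • g s) s := by
    have hexp := ((((hasDerivAt_id s).sub_const T).ofReal_comp).const_mul (-μ)).cexp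
    refine (hexp.smul (hf s hs)).congr_deriv ?_
    simp only [id]
    module
  have hasDerivAt_exp_mul_bound (s : ℝ) :
      HasDerivAt (fun s => Real.exp (-μ.re * (s - T)) * gronwallBound ‖f T‖ μ.re ε (s - T))
        (Real.exp (-μ.re * (s - T)) * ε) s := by
    have hexp := (((hasDerivAt_id s).sub_const T).const_mul (-μ.re)).exp
    refine (hexp.mul (hasDerivAt_gronwallBound_shift ‖f T‖ μ.re ε s T)).congr_deriv ?_
    simp only [id]
    ring
  have hle := image_norm_le_of_norm_deriv_right_le_deriv_boundary
    (fun s hs => (hasDerivAt_exp_smul s hs.1).continuousAt.continuousWithinAt)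
    (fun s hs => (hasDerivAt_exp_smul s hs.1).hasDerivWithinAt)
    (by simp [gronwallBound_x0]) hasDerivAt_exp_mul_bound
    (fun s hs => by
      rw [norm_exp_smul]
      exact mul_le_mul_of_nonneg_left (hg s hs.1) (Real.exp_pos _).le)
    (Set.right_mem_Icc.2 ht)
  rw [norm_exp_smul] at hle
  exact le_of_mul_le_mul_left hle (Real.exp_pos _)

lemma tendsto_gronwallBound_of_neg (δ ε : ℝ) {K : ℝ} (hK : K < 0) :
    Tendsto (gronwallBound δ K ε) atTop (𝓝 (ε / -K)) := by
  have hexp : Tendsto (fun x => Real.exp (K * x)) atTop (𝓝 0) :=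
    Real.tendsto_exp_atBot.comp (tendsto_id.const_mul_atTop_of_neg hK)
  rw [gronwallBound_of_K_ne_0 hK.ne]
  simpa [div_neg] using (hexp.const_mul δ).add ((hexp.sub_const 1).const_mul (ε / K))

lemma tendsto_zero_of_hasDerivAt_smul_add {μ : ℂ} (hμ : μ.re < 0) {f g : ℝ → E}
    (hf : ∀ᶠ t in atTop, HasDerivAt f (μ • f t + g t) t) (hg : Tendsto g atTop (𝓝 0)) :
    Tendsto f atTop (𝓝 0) := by
  rw [NormedAddGroup.tendsto_nhds_zero]
  intro η hη
  obtain ⟨ε, hε, hεη⟩ : ∃ ε > 0, ε / -μ.re < η :=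
    ⟨η / 2 * -μ.re, mul_pos (half_pos hη) (neg_pos.2 hμ), by
      rw [mul_div_cancel_right₀ _ (neg_pos.2 hμ).ne']; exact half_lt_self hη⟩
  obtain ⟨T, hT⟩ := eventually_atTop.1
    (hf.and (NormedAddGroup.tendsto_nhds_zero.1 hg ε hε))
  have hbound : Tendsto (fun t => gronwallBound ‖f T‖ μ.re ε (t - T)) atTop (𝓝 (ε / -μ.re)) :=
    (tendsto_gronwallBound_of_neg _ ε hμ).comp (tendsto_atTop_add_const_right _ (-T) tendsto_id)
  filter_upwards [hbound.eventually_lt_const hεη, eventually_ge_atTop T] with t hlt ht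
  exact (norm_le_gronwallBound_of_hasDerivAt_smul_add (fun s hs => (hT s hs).1)
    (fun s hs => (hT s hs).2.le) ht).trans_lt hlt

lemma hasDerivAt_aeval_apply {L : E →L[ℂ] E} {x : ℝ → E} {t : ℝ} (p : ℂ[X])
    (hx : HasDerivAt x (L (x t)) t) :
    HasDerivAt (fun t => aeval L p (x t)) (L (aeval L p (x t))) t := by
  have hcomm : aeval L p * L = L * aeval L p := by
    simpa only [map_mul, aeval_X] using congrArg (aeval L) (mul_comm p X)
  exact (((aeval L p).restrictScalars ℝ).hasFDerivAt.comp_hasDerivAt t hx).congr_deriv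
    (congrArg (· (x t)) hcomm)

lemma tendsto_zero_of_tendsto_aeval_prod_X_sub_C {L : E →L[ℂ] E} {x : ℝ → E}
    (hx : ∀ᶠ t in atTop, HasDerivAt x (L (x t)) t) {s : Multiset ℂ} (hs : ∀ μ ∈ s, μ.re < 0)
    (hlim : Tendsto (fun t => aeval L (s.map (X - C ·)).prod (x t)) atTop (𝓝 0)) :
    Tendsto x atTop (𝓝 0) := by
  induction s using Multiset.induction_on with
  | empty => simpa using hlim
  | cons μ s ih =>
    rw [Multiset.forall_mem_cons] at hs
    refine ih hs.2 (tendsto_zero_of_hasDerivAt_smul_add hs.1 ?_ hlim)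
    filter_upwards [hx] with t ht
    refine (hasDerivAt_aeval_apply _ ht).congr_deriv ?_
    simp [Algebra.algebraMap_eq_smul_one]

lemma tendsto_zero_of_tendsto_aeval {L : E →L[ℂ] E} {x : ℝ → E}
    (hx : ∀ᶠ t in atTop, HasDerivAt x (L (x t)) t) {p : ℂ[X]} (hp : p ≠ 0)
    (hroots : ∀ μ ∈ p.roots, μ.re < 0)
    (hlim : Tendsto (fun t => aeval L p (x t)) atTop (𝓝 0)) : Tendsto x atTop (𝓝 0) := by
  refine tendsto_zero_of_tendsto_aeval_prod_X_sub_C hx hroots ?_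
  rw [(IsAlgClosed.splits p).eq_prod_roots] at hlim
  simpa [Algebra.algebraMap_eq_smul_one, smul_smul, leadingCoeff_ne_zero.2 hp]
    using hlim.const_smul p.leadingCoeff⁻¹

end LinearODE

section Hurwitz

open Polynomial Matrix

variable {n : Type*} [Fintype n] [DecidableEq n]

lemma tendsto_zero_of_hasDerivAt_mulVec {A : Matrix n n ℂ} (hA : ∀ μ ∈ spectrum ℂ A, μ.re < 0)
    {x : ℝ → n → ℂ} (hx : ∀ᶠ t in atTop, HasDerivAt x (A *ᵥ x t) t) :
    Tendsto x atTop (𝓝 0) := by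
  let Φ := (toLinAlgEquiv' (R := ℂ) (n := n)).trans (Module.End.toContinuousLinearMap (n → ℂ))
  have hCayleyHamilton : aeval (Φ A) A.charpoly = 0 := by
    rw [aeval_algHom_apply, aeval_self_charpoly, map_zero]
  refine tendsto_zero_of_tendsto_aeval (L := Φ A) hx A.charpoly_monic.ne_zero
    (fun μ hμ => hA μ (mem_spectrum_of_isRoot_charpoly (isRoot_of_mem_roots hμ)))
    (by simp [hCayleyHamilton])

/-- A Hurwitz (or stable) real matrix: all its complex eigenvalues lie in the open left
half-plane. -/
def IsHurwitz (A : Matrix n n ℝ) : Prop :=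
  ∀ μ ∈ spectrum ℂ (A.map Complex.ofRealHom), μ.re < 0

lemma IsHurwitz.tendsto_zero {A : Matrix n n ℝ} (hA : IsHurwitz A) {x : ℝ → n → ℝ}
    (hx : ∀ᶠ t in atTop, HasDerivAt x (A *ᵥ x t) t) : Tendsto x atTop (𝓝 0) := by
  have hcomplex : Tendsto (fun t i => (x t i : ℂ)) atTop (𝓝 0) := by
    refine tendsto_zero_of_hasDerivAt_mulVec hA ?_
    filter_upwards [hx] with t ht
    refine hasDerivAt_pi.2 fun i => ((hasDerivAt_pi.1 ht i).ofReal_comp).congr_deriv ?_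
    simp [mulVec, dotProduct]
  rw [tendsto_pi_nhds] at hcomplex ⊢
  exact fun i => (Complex.continuous_re.tendsto 0).comp (hcomplex i)

end Hurwitz

section RouthHurwitz

open Polynomial Matrix

variable {a b c : ℝ}

lemma re_neg_of_cubic_eq_zero (ha : 0 < a) (hc : 0 < c) (habc : c < a * b)
    {z : ℂ} (hz : z ^ 3 + a * z ^ 2 + b * z + c = 0) : z.re < 0 := by
  have hb : 0 < b := pos_of_mul_pos_right (hc.trans habc) ha.le
  obtain ⟨x, y⟩ := z
  by_contra! hx
  change 0 ≤ x at hx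
  have hre : x ^ 3 - 3 * x * y ^ 2 + a * (x ^ 2 - y ^ 2) + b * x + c = 0 := by
    have := congrArg Complex.re hz
    simp only [pow_succ, pow_zero, one_mul, Complex.add_re, Complex.mul_re, Complex.mul_im,
      Complex.ofReal_re, Complex.ofReal_im, zero_mul, sub_zero, Complex.zero_re] at this
    linear_combination this
  have him : y * (3 * x ^ 2 - y ^ 2 + 2 * a * x + b) = 0 := by
    have := congrArg Complex.im hz
    simp only [pow_succ, pow_zero, one_mul, Complex.add_im, Complex.mul_im, Complex.mul_re,
      Complex.ofReal_re, Complex.ofReal_im, zero_mul, add_zero, Complex.zero_im] at this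
    linear_combination this
  rcases mul_eq_zero.1 him with hy | hy
  · have hpos : 0 < x ^ 3 + a * x ^ 2 + b * x + c := by positivity
    rw [hy] at hre
    linarith
  · -- eliminating `y ^ 2` from the real part leaves a cubic in `x` with positive coefficients
    have hpos : 0 < 8 * x ^ 3 + 8 * a * x ^ 2 + 2 * (a ^ 2 + b) * x + (a * b - c) :=
      add_pos_of_nonneg_of_pos (by positivity) (sub_pos.2 habc)
    have hzero : 8 * x ^ 3 + 8 * a * x ^ 2 + 2 * (a ^ 2 + b) * x + (a * b - c) = 0 := by
      linear_combination (3 * x + a) * hy - hre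
    exact hpos.ne' hzero

/-- The companion matrix of `X ^ 3 + a X ^ 2 + b X + c`, transposed so that it is the matrix of
the scalar equation `x''' + a x'' + b x' + c x = 0` in the state vector `(x, x', x'')`. -/
def cubicCompanion (a b c : ℝ) : Matrix (Fin 3) (Fin 3) ℝ :=
  !![0, 1, 0; 0, 0, 1; -c, -b, -a]

lemma cubicCompanion_mulVec (a b c x y z : ℝ) :
    cubicCompanion a b c *ᵥ ![x, y, z] = ![y, z, -(a * z + b * y + c * x)] := by
  simp [cubicCompanion, cons_mulVec, -mulVec_cons, add_assoc]

lemma charpoly_cubicCompanion (a b c : ℝ) :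
    (cubicCompanion a b c).charpoly = X ^ 3 + C a * X ^ 2 + C b * X + C c := by
  have hcharmatrix : charmatrix (cubicCompanion a b c) =
      !![X, -1, 0; 0, X, -1; C c, C b, X + C a] := by
    ext1 i j
    fin_cases i <;> fin_cases j <;> simp [cubicCompanion]
  rw [charpoly, hcharmatrix, det_fin_three]
  simp only [of_apply, cons_val]
  ring

lemma isHurwitz_cubicCompanion (ha : 0 < a) (hc : 0 < c) (habc : c < a * b) :
    IsHurwitz (cubicCompanion a b c) := by
  intro μ hμ
  rw [mem_spectrum_iff_isRoot_charpoly, charpoly_map, charpoly_cubicCompanion] at hμ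
  exact re_neg_of_cubic_eq_zero ha hc habc (by simpa using hμ)

theorem tendsto_zero_of_third_order_ode (ha : 0 < a) (hc : 0 < c) (habc : c < a * b)
    {x y z : ℝ → ℝ} (hx : ∀ᶠ t in atTop, HasDerivAt x (y t) t)
    (hy : ∀ᶠ t in atTop, HasDerivAt y (z t) t)
    (hz : ∀ᶠ t in atTop, HasDerivAt z (-(a * z t + b * y t + c * x t)) t) :
    Tendsto (fun t => (x t, y t, z t)) atTop (𝓝 0) := by
  have hsystem : ∀ᶠ t in atTop, HasDerivAt (fun t => ![x t, y t, z t])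
      (cubicCompanion a b c *ᵥ ![x t, y t, z t]) t := by
    filter_upwards [hx, hy, hz] with t hx hy hz
    rw [cubicCompanion_mulVec]
    exact hx.finCons (hy.finCons (hz.finCons (hasDerivAt_pi.2 finZeroElim)))
  have hlim := tendsto_pi_nhds.1 ((isHurwitz_cubicCompanion ha hc habc).tendsto_zero hsystem)
  exact (hlim 0).prodMk_nhds ((hlim 1).prodMk_nhds (hlim 2))

end RouthHurwitz

/-- Static linear policy in the undisturbed training environment: the closed
loop `p' = v`, `v' = a`, `a' = (-a + k (r - (p + v + a)))/ς` with `ς > 0`,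
`k > 0`, `1 + k > ς` satisfies `(p, v, a) → (r, 0, 0)` as `t → ∞`; in
particular the output `y = p + v + a` converges to the reference `r`. -/
theorem stmt_13 (ς k r : ℝ) (hς : 0 < ς) (hk : 0 < k) (hkς : 1 + k > ς)
    (p v a : ℝ → ℝ)
    (hp : Differentiable ℝ p) (hv : Differentiable ℝ v) (ha : Differentiable ℝ a)
    (hpv : ∀ t, 0 ≤ t → deriv p t = v t)
    (hva : ∀ t, 0 ≤ t → deriv v t = a t)
    (hcl : ∀ t, 0 ≤ t →
      deriv a t = (-a t + k * (r - (p t + v t + a t))) / ς) :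
    Tendsto (fun t => (p t, v t, a t)) atTop (𝓝 (r, 0, 0)) := by
  have hstable : k / ς < (1 + k) / ς * (k / ς) :=
    lt_mul_of_one_lt_left (by positivity) ((one_lt_div hς).2 hkς)
  have hlim : Tendsto (fun t => (p t - r, v t, a t)) atTop (𝓝 0) := by
    refine tendsto_zero_of_third_order_ode (by positivity) (by positivity) hstable ?_ ?_ ?_ <;>
      filter_upwards [eventually_ge_atTop 0] with t ht
    · exact hpv t ht ▸ (hp t).hasDerivAt.sub_const r
    · exact hva t ht ▸ (hv t).hasDerivAt
    · exact (ha t).hasDerivAt.congr_deriv (by rw [hcl t ht]; ring)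
  simpa using hlim.add_const (r, 0, 0)
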